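/- arXiv:math/0511507 — 4 statements merged into one kernel-verified Lean document; each statement's English description precedes it below -/
import Mathlib

section
/- For every integer μ ≥ 1 and every q ∈ (0,1], the left-boundary Müller–Wang kernel K1q satisfies the moment conditions ∫_{-1}^{q} K1q(r) dr = 1 and ∫_{-1}^{q} r·K1q(r) dr = 0. -/
open MeasureTheory Set

/-!
Substituting `x = 1 + r` and writing `a = 1 + q`, both moments become combinations of the
integrals `∫₀ᵃ xᵐ (a - x)ⁿ dx = m! n! / (m + n + 1)! · a ^ (m + n + 1)` (`beta_nat`) with
`n = μ - 1` and `m ∈ {μ, μ + 1, μ + 2}`, because in terms of `x` the bracket of the kernel is the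
affine function `2((2 - a)μ - a + 1) x + a (2(a - 1) - μ(2 - a))`. The ratios of consecutive such
integrals are rational in `μ`, so the claims reduce to polynomial identities and to the value
of `choose (2μ - 1) μ` in terms of factorials.
-/

/-- Scaled Beta integral at natural exponents, in division-free form. The induction step
integrates the derivative of `x ^ (m + 1) * (a - x) ^ (n + 1)`, which vanishes at both ends. -/
lemma beta_nat (a : ℝ) (n : ℕ) : ∀ m : ℕ,
    ((m + n + 1).factorial : ℝ) * ∫ x in (0 : ℝ)..a, x ^ m * (a - x) ^ n
      = (m.factorial : ℝ) * n.factorial * a ^ (m + n + 1) := by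
  induction n with
  | zero =>
    intro m
    simp only [pow_zero, mul_one, integral_pow, add_zero, Nat.factorial_succ, Nat.factorial_zero]
    have : (m : ℝ) + 1 ≠ 0 := by positivity
    push_cast
    field_simp
    simp
  | succ n ih =>
    intro m
    have key : ((m : ℝ) + 1) * (∫ x in (0 : ℝ)..a, x ^ m * (a - x) ^ (n + 1))
        - ((n : ℝ) + 1) * (∫ x in (0 : ℝ)..a, x ^ (m + 1) * (a - x) ^ n) = 0 := by
      have h := intervalIntegral.integral_eq_sub_of_hasDerivAt (a := 0) (b := a)
        (f := fun x : ℝ => x ^ (m + 1) * (a - x) ^ (n + 1))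
        (f' := fun x : ℝ => ((m : ℝ) + 1) * (x ^ m * (a - x) ^ (n + 1))
          - ((n : ℝ) + 1) * (x ^ (m + 1) * (a - x) ^ n))
        (fun x _ => by
          have h1 := (hasDerivAt_id x).pow (m + 1)
          have h2 := ((hasDerivAt_id x).const_sub a).pow (n + 1)
          convert! h1.mul h2 using 1
          simp
          ring)
        (Continuous.intervalIntegrable (by fun_prop) _ _)
      rw [intervalIntegral.integral_sub (Continuous.intervalIntegrable (by fun_prop) _ _)
        (Continuous.intervalIntegrable (by fun_prop) _ _),
        intervalIntegral.integral_const_mul, intervalIntegral.integral_const_mul] at h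
      rw [h]
      simp
    have h2 := ih (m + 1)
    rw [show m + 1 + n + 1 = m + (n + 1) + 1 by ring] at h2
    have hm : (m : ℝ) + 1 ≠ 0 := by positivity
    apply mul_left_cancel₀ hm
    rw [Nat.factorial_succ m] at h2
    rw [Nat.factorial_succ n]
    push_cast at h2 ⊢
    linear_combination ((m + (n + 1) + 1).factorial : ℝ) * key + ((n : ℝ) + 1) * h2

/-- The integral over `ℝ` of a function cut off to `[-1, q]`, after the shift
`r = x - 1`. -/
lemma integral_cutoff (q : ℝ) (hq : -1 ≤ q) (f g : ℝ → ℝ)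
    (hf : ∀ r, f r = if r ∈ Icc (-1 : ℝ) q then g r else 0) :
    ∫ r, f r = ∫ x in (0 : ℝ)..(1 + q), g (x - 1) := by
  have h1 : f = (Icc (-1 : ℝ) q).indicator g := by
    funext r
    rw [hf r, indicator_apply]
  rw [h1, integral_indicator measurableSet_Icc, integral_Icc_eq_integral_Ioc,
    ← intervalIntegral.integral_of_le hq, intervalIntegral.integral_comp_sub_right]
  congr 1 <;> ring

/-- For every integer μ ≥ 1 and q ∈ (0,1], the left-boundary
Müller–Wang kernel
`K1q(r) = C(μ)·(1+q)^{-(2μ+2)}·(1+r)^μ·(q-r)^{μ-1}·[2r((1-q)μ - q) + μ(1-q)² + 2q²]`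
on `[-1,q]` (zero outside), with `C(μ) = 2(2μ+1)·choose(2μ-1, μ)`, satisfies
`∫ K1q = 1` and `∫ r·K1q(r) dr = 0`. -/
theorem muller_wang_left_boundary_kernel_moments
    (μ : ℕ) (hμ : 1 ≤ μ) (q : ℝ) (hq : q ∈ Set.Ioc (0 : ℝ) 1) (C : ℝ)
    (hC : C = 2 * (2 * (μ : ℝ) + 1) * (Nat.choose (2 * μ - 1) μ : ℝ))
    (K : ℝ → ℝ)
    (hK : ∀ r : ℝ, K r =
      if r ∈ Set.Icc (-1 : ℝ) q then
        C * (1 + q) ^ (-(2 * (μ : ℝ) + 2)) * (1 + r) ^ μ * (q - r) ^ (μ - 1) *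
          (2 * r * ((1 - q) * μ - q) + μ * (1 - q) ^ 2 + 2 * q ^ 2)
      else 0) :
    (∫ r : ℝ, K r) = 1 ∧ (∫ r : ℝ, r * K r) = 0 := by
  obtain ⟨n, rfl⟩ : ∃ n, μ = n + 1 := ⟨μ - 1, by omega⟩
  obtain ⟨hq0, hq1⟩ := hq
  obtain ⟨a, ha⟩ : ∃ a, a = 1 + q := ⟨_, rfl⟩
  have ha0 : 0 < a := by linarith
  obtain rfl : q = a - 1 := by linarith
  -- Replace the real exponent by a natural one.
  have hpow : (1 + (a - 1)) ^ (-(2 * ((n + 1 : ℕ) : ℝ) + 2)) = (a ^ (2 * n + 4))⁻¹ := by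
    rw [← ha, Real.rpow_neg ha0.le, ← Real.rpow_natCast]
    congr 2
    push_cast
    ring
  rw [hpow] at hK
  -- The binomial coefficient in terms of factorials.
  have hch : (Nat.choose (2 * (n + 1) - 1) (n + 1) : ℝ) * ((n + 1).factorial * n.factorial)
      = (2 * n + 1).factorial := by
    have := Nat.choose_mul_factorial_mul_factorial (n := 2 * n + 1) (k := n + 1) (by omega)
    rw [show 2 * n + 1 - (n + 1) = n by omega] at this
    rw [show 2 * (n + 1) - 1 = 2 * n + 1 by omega, ← this]
    push_cast
    ring
  obtain ⟨c, hc⟩ : ∃ c : ℝ, c = C * (a ^ (2 * n + 4))⁻¹ := ⟨_, rfl⟩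
  obtain ⟨A, hA⟩ : ∃ A : ℝ, A = 2 * ((2 - a) * (n + 1) - a + 1) := ⟨_, rfl⟩
  obtain ⟨B, hB⟩ : ∃ B : ℝ, B = a * (2 * (a - 1) - (n + 1) * (2 - a)) := ⟨_, rfl⟩
  obtain ⟨I, hI⟩ : ∃ I : ℕ → ℝ, ∀ m, I m = ∫ x in (0 : ℝ)..a, x ^ m * (a - x) ^ n :=
    ⟨_, fun _ => rfl⟩
  have hint : ∀ m : ℕ, IntervalIntegrable (fun x : ℝ => x ^ m * (a - x) ^ n) volume 0 a :=
    fun m => Continuous.intervalIntegrable (by fun_prop) _ _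
  -- In terms of `x = 1 + r` the bracket of the kernel is `A * x + B`.
  have M0 : ∫ r, K r = c * (A * I (n + 2) + B * I (n + 1)) := by
    rw [integral_cutoff (a - 1) (by linarith) K _ hK, ← ha, hI, hI,
      ← intervalIntegral.integral_const_mul, ← intervalIntegral.integral_const_mul,
      ← intervalIntegral.integral_add ((hint _).const_mul _) ((hint _).const_mul _),
      ← intervalIntegral.integral_const_mul]
    congr 1
    funext x
    rw [hc, hA, hB]
    simp only [Nat.add_sub_cancel]
    push_cast
    rw [show 1 + (x - 1) = x by ring, show a - 1 - (x - 1) = a - x by ring]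
    ring
  have M1 : ∫ r, r * K r
      = c * (A * I (n + 3) + (B - A) * I (n + 2) - B * I (n + 1)) := by
    rw [integral_cutoff (a - 1) (by linarith) (fun r => r * K r) _
      (fun r => by rw [hK r, mul_ite, mul_zero]), ← ha, hI, hI, hI,
      ← intervalIntegral.integral_const_mul, ← intervalIntegral.integral_const_mul,
      ← intervalIntegral.integral_const_mul,
      ← intervalIntegral.integral_add ((hint _).const_mul _) ((hint _).const_mul _),
      ← intervalIntegral.integral_sub (((hint _).const_mul _).add ((hint _).const_mul _))
        ((hint _).const_mul _),
      ← intervalIntegral.integral_const_mul]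
    congr 1
    funext x
    rw [hc, hA, hB]
    simp only [Nat.add_sub_cancel]
    push_cast
    rw [show 1 + (x - 1) = x by ring, show a - 1 - (x - 1) = a - x by ring]
    ring
  have b1 := beta_nat a n (n + 1)
  have b2 := beta_nat a n (n + 2)
  have b3 := beta_nat a n (n + 3)
  rw [← hI] at b1 b2 b3
  rw [show n + 1 + n + 1 = (2 * n + 1) + 1 by ring] at b1
  rw [show n + 2 + n + 1 = (2 * n + 1) + 1 + 1 by ring, Nat.factorial_succ (n + 1)] at b2
  rw [show n + 3 + n + 1 = (2 * n + 1) + 1 + 1 + 1 by ring, Nat.factorial_succ (n + 2),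
    Nat.factorial_succ (n + 1)] at b3
  simp only [Nat.factorial_succ (2 * n + 1 + 1 + 1), Nat.factorial_succ (2 * n + 1 + 1),
    Nat.factorial_succ (2 * n + 1)] at b1 b2 b3
  have hF : ((n + 1).factorial : ℝ) * n.factorial ≠ 0 := by positivity
  have hchpos : (Nat.choose (2 * (n + 1) - 1) (n + 1) : ℝ) ≠ 0 := by
    have := Nat.choose_pos (n := 2 * (n + 1) - 1) (k := n + 1) (by omega)
    positivity
  push_cast [← hch] at b1 b2 b3
  generalize (Nat.choose (2 * (n + 1) - 1) (n + 1) : ℝ) = b at *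
  generalize ((n + 1).factorial : ℝ) = F at *
  generalize (n.factorial : ℝ) = G at *
  have e1 : I (n + 1) = a ^ (2 * n + 2) / (b * (2 * n + 2)) := by
    rw [eq_div_iff (by positivity)]
    apply mul_left_cancel₀ hF
    linear_combination b1
  have e2 : I (n + 2) = a ^ (2 * n + 3) * (n + 2) / (b * ((2 * n + 2) * (2 * n + 3))) := by
    rw [eq_div_iff (by positivity)]
    apply mul_left_cancel₀ hF
    linear_combination b2
  have e3 : I (n + 3) = a ^ (2 * n + 4) * ((n + 2) * (n + 3))
      / (b * ((2 * n + 2) * (2 * n + 3) * (2 * n + 4))) := by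
    rw [eq_div_iff (by positivity)]
    apply mul_left_cancel₀ hF
    linear_combination b3
  have n1 : (n : ℝ) + 1 ≠ 0 := by positivity
  have n2 : (n : ℝ) + 2 ≠ 0 := by positivity
  have n3 : 2 * (n : ℝ) + 3 ≠ 0 := by positivity
  have n4 : 2 * (n : ℝ) + 2 ≠ 0 := by positivity
  have n5 : 2 * (n : ℝ) + 4 ≠ 0 := by positivity
  constructor
  · rw [M0, e1, e2, hc, hC, hA, hB]
    push_cast
    field_simp
    ring
  · rw [M1, e1, e2, e3, hA, hB]
    have : ∀ z : ℝ, z = 0 → c * z = 0 := fun z hz => by rw [hz, mul_zero]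
    apply this
    field_simp
    ring
end

section
/- For every integer μ ≥ 1 and every p ∈ (0,1], the right-boundary Müller–Wang kernel Kp1 satisfies the moment conditions ∫_{-p}^{1} Kp1(r) dr = 1 and ∫_{-p}^{1} r·Kp1(r) dr = 0. -/
open MeasureTheory Set

/-!
In the variable `x = p + r`, with `s = p + 1`, the bracket of the kernel is the affine function
`2 A x - μ s (s - 2)` where `A = (s - 2) μ + s - 1`. Both moments are therefore linear combinations
of the Beta integrals `∫ (p + r) ^ k * (1 - r) ^ μ` over `[-p, 1]` for `k = μ - 1, μ, μ + 1`, which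
`beta_integral_nat` evaluates in terms of factorials. The successive ratios of these three integrals
are `s μ / (2 μ + 1)` and `s / 2`, and the claims reduce to algebraic identities. Writing
`μ = m + 1` removes the truncated subtractions.
-/

/-- The Beta integral with natural exponents, transported to `[-p, 1]`; induction on `b` through
integration by parts. -/
lemma beta_integral_nat (p : ℝ) (b : ℕ) : ∀ a : ℕ,
    ∫ r in (-p)..1, (p + r) ^ a * (1 - r) ^ b =
      (p + 1) ^ (a + b + 1) * (a.factorial * b.factorial / (a + b + 1).factorial) := by
  induction b with
  | zero =>
    intro a
    have h : ∀ r : ℝ, HasDerivAt (fun r => (p + r) ^ (a + 1) / ((a : ℝ) + 1)) ((p + r) ^ a) r := by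
      intro r
      have h1 := (((hasDerivAt_id r).const_add p).pow (a + 1)).div_const ((a : ℝ) + 1)
      refine h1.congr_deriv ?_
      simp only [id, Nat.add_sub_cancel]
      push_cast
      field_simp
    have e := intervalIntegral.integral_eq_sub_of_hasDerivAt (a := -p) (b := 1)
      (fun r _ => h r) (Continuous.intervalIntegrable (by fun_prop) _ _)
    simp only [pow_zero, mul_one, add_zero]
    rw [e, Nat.factorial_succ]
    have : (a.factorial : ℝ) ≠ 0 := by positivity
    push_cast
    simp
    field_simp
  | succ b ih =>
    intro a
    have h : ∀ r : ℝ, HasDerivAt (fun r => (p + r) ^ (a + 1) * (1 - r) ^ (b + 1))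
        (((a : ℝ) + 1) * ((p + r) ^ a * (1 - r) ^ (b + 1))
          - ((b : ℝ) + 1) * ((p + r) ^ (a + 1) * (1 - r) ^ b)) r := by
      intro r
      have h1 := (((hasDerivAt_id r).const_add p).pow (a + 1)).mul
        (((hasDerivAt_id r).const_sub 1).pow (b + 1))
      refine h1.congr_deriv ?_
      simp only [id, Nat.add_sub_cancel, Pi.pow_apply]
      push_cast
      ring
    have e := intervalIntegral.integral_eq_sub_of_hasDerivAt (a := -p) (b := 1)
      (fun r _ => h r) (Continuous.intervalIntegrable (by fun_prop) _ _)
    rw [intervalIntegral.integral_sub (Continuous.intervalIntegrable (by fun_prop) _ _)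
      (Continuous.intervalIntegrable (by fun_prop) _ _), intervalIntegral.integral_const_mul,
      intervalIntegral.integral_const_mul, ih (a + 1)] at e
    have hz : (p + 1) ^ (a + 1) * (1 - (1 : ℝ)) ^ (b + 1)
        - (p + -p) ^ (a + 1) * (1 - -p) ^ (b + 1) = 0 := by simp
    rw [hz, show a + 1 + b + 1 = a + (b + 1) + 1 by ring, Nat.factorial_succ a] at e
    rw [Nat.factorial_succ b]
    have ha : (a : ℝ) + 1 ≠ 0 := by positivity
    apply mul_left_cancel₀ ha
    push_cast at e ⊢
    linear_combination e

theorem muller_wang_right_boundary_kernel_moments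
    (μ : ℕ) (hμ : 1 ≤ μ) (p : ℝ) (hp : p ∈ Set.Ioc (0 : ℝ) 1) (C : ℝ)
    (hC : C = 2 * (2 * (μ : ℝ) + 1) * (Nat.choose (2 * μ - 1) μ : ℝ))
    (K : ℝ → ℝ)
    (hK : ∀ r : ℝ, K r =
      if r ∈ Set.Icc (-p) (1 : ℝ) then
        C * (p + 1) ^ (-(2 * (μ : ℝ) + 2)) * (p + r) ^ (μ - 1) * (1 - r) ^ μ *
          (2 * r * ((p - 1) * μ + p) + μ * (p - 1) ^ 2 + 2 * p ^ 2)
      else 0) :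
    (∫ r : ℝ, K r) = 1 ∧ (∫ r : ℝ, r * K r) = 0 := by
  obtain ⟨m, rfl⟩ : ∃ m, μ = m + 1 := ⟨μ - 1, by omega⟩
  obtain ⟨hp0, -⟩ := hp
  have hs : 0 < p + 1 := by linarith
  have hpow : (p + 1) ^ (-(2 * ((m + 1 : ℕ) : ℝ) + 2)) = ((p + 1) ^ (2 * m + 4))⁻¹ := by
    rw [Real.rpow_neg hs.le, ← Real.rpow_natCast]
    congr 2
    push_cast
    ring
  rw [hpow] at hK
  simp only [Nat.add_sub_cancel] at hK
  have hch : ((2 * (m + 1) - 1).choose (m + 1) : ℝ)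
      = (2 * m + 1).factorial / ((m + 1).factorial * m.factorial) := by
    rw [show 2 * (m + 1) - 1 = 2 * m + 1 by omega, Nat.cast_choose ℝ (by omega)]
    rw [show 2 * m + 1 - (m + 1) = m by omega]
  rw [hch] at hC
  -- The three Beta integrals, all expressed through `m!` and `(2 m + 1)!`.
  have B0 := beta_integral_nat p (m + 1) m
  have B1 := beta_integral_nat p (m + 1) (m + 1)
  have B2 := beta_integral_nat p (m + 1) (m + 2)
  rw [show m + (m + 1) + 1 = (2 * m + 1) + 1 by ring] at B0
  rw [show (m + 1) + (m + 1) + 1 = (2 * m + 1) + 1 + 1 by ring] at B1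
  rw [show (m + 2) + (m + 1) + 1 = (2 * m + 1) + 1 + 1 + 1 by ring,
    show m + 2 = m + 1 + 1 by ring] at B2
  simp only [Nat.factorial_succ (2 * m + 1 + 1 + 1), Nat.factorial_succ (2 * m + 1 + 1),
    Nat.factorial_succ (2 * m + 1), Nat.factorial_succ (m + 1), Nat.factorial_succ m]
    at B0 B1 B2 hC
  have hf : (m.factorial : ℝ) ≠ 0 := by positivity
  have hg : ((2 * m + 1).factorial : ℝ) ≠ 0 := by positivity
  have key : ∀ (g : ℝ → ℝ) (c0 c1 c2 : ℝ),
      (∀ r, g r = if r ∈ Set.Icc (-p) (1 : ℝ) then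
        c0 * ((p + r) ^ m * (1 - r) ^ (m + 1)) + c1 * ((p + r) ^ (m + 1) * (1 - r) ^ (m + 1))
          + c2 * ((p + r) ^ (m + 1 + 1) * (1 - r) ^ (m + 1)) else 0) →
      ∫ r, g r = c0 * (∫ r in (-p)..1, (p + r) ^ m * (1 - r) ^ (m + 1))
        + c1 * (∫ r in (-p)..1, (p + r) ^ (m + 1) * (1 - r) ^ (m + 1))
        + c2 * (∫ r in (-p)..1, (p + r) ^ (m + 1 + 1) * (1 - r) ^ (m + 1)) := by
    intro g c0 c1 c2 hg
    have h1 : g = (Set.Icc (-p) (1 : ℝ)).indicator (fun r =>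
        c0 * ((p + r) ^ m * (1 - r) ^ (m + 1)) + c1 * ((p + r) ^ (m + 1) * (1 - r) ^ (m + 1))
          + c2 * ((p + r) ^ (m + 1 + 1) * (1 - r) ^ (m + 1))) := by
      ext r
      rw [hg r, Set.indicator_apply]
    rw [h1, integral_indicator measurableSet_Icc, integral_Icc_eq_integral_Ioc,
      ← intervalIntegral.integral_of_le (by linarith),
      intervalIntegral.integral_add (Continuous.intervalIntegrable (by fun_prop) _ _)
        (Continuous.intervalIntegrable (by fun_prop) _ _),
      intervalIntegral.integral_add (Continuous.intervalIntegrable (by fun_prop) _ _)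
        (Continuous.intervalIntegrable (by fun_prop) _ _)]
    simp only [intervalIntegral.integral_const_mul]
  -- `a * (p + r) + b` is the bracket of the kernel.
  set a : ℝ := 2 * ((p - 1) * ((m : ℝ) + 1) + p) with ha
  set b : ℝ := -((m : ℝ) + 1) * (p + 1) * (p - 1) with hb
  set D : ℝ := C * ((p + 1) ^ (2 * m + 4))⁻¹ with hD
  constructor
  · rw [key K (D * b) (D * a) 0 ?_, B0, B1, hD, hC, ha, hb]
    · push_cast
      field_simp
      ring
    · intro r
      rw [hK r]
      congr 1
      rw [ha, hb]
      push_cast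
      ring
  · rw [key (fun r => r * K r) (D * (-p * b)) (D * (b - p * a)) (D * a) ?_, B0, B1, B2, ha, hb]
    · push_cast
      field_simp
      ring
    · intro r
      simp only [hK r, mul_ite, mul_zero]
      congr 1
      rw [ha, hb]
      push_cast
      ring
end

section
/- Let K : ℝ → ℝ be integrable, vanishing outside [-1,1], with ∫_{ℝ} K(r) dr = 1 and ∫_{ℝ} r·K(r) dr = 0. Let a > 0, x ∈ ℝ, B ≥ 0, and let f : ℝ → ℝ be twice differentiable on [x-a, x+a] with |f''(y)| ≤ B for all y ∈ [x-a, x+a]. Then |∫_{ℝ} K(r)·f(x - r·a) dr − f(x)| ≤ (B·a²/2)·∫_{ℝ} r²·|K(r)| dr. (This is the second-order bias bound underlying Proposition 3.1, r = 2: kernel smoothing of a C² function with a zero-first-moment kernel has bias of order O(a²).) -/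
/-!
Since `∫ K = 1` and `∫ r K(r) dr = 0`, the bias equals `∫ K(r) R(r) dr`, where
`R(r) = f(x - r a) - f(x) + r a f'(x)` is the first-order Taylor remainder of `f` at `x` with
increment `-r a`. On the support of `K` the increment has size at most `a`, so
`|R(r)| ≤ B (r a)² / 2` (`abs_taylor_remainder_le`), and integrating this against `|K|` gives
the bound. The second derivative is not assumed continuous, so the Taylor estimate comes from the
mean value inequality rather than from the integral form of the remainder.
-/

open MeasureTheory Set

/-- First-order Taylor estimate with a bounded, possibly discontinuous, second derivative. The
function is restricted to the segment `t ↦ x + t h`, which treats both signs of `h` at once. -/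
theorem abs_taylor_remainder_le {f f' f'' : ℝ → ℝ} {a x B h : ℝ} (hh : |h| ≤ a)
    (hf' : ∀ y ∈ Set.Icc (x - a) (x + a), HasDerivAt f (f' y) y)
    (hf'' : ∀ y ∈ Set.Icc (x - a) (x + a), HasDerivAt f' (f'' y) y)
    (hbdd : ∀ y ∈ Set.Icc (x - a) (x + a), |f'' y| ≤ B) :
    |f (x + h) - f x - h * f' x| ≤ B * h ^ 2 / 2 := by
  have hmem : ∀ t ∈ Icc (0 : ℝ) 1, x + t * h ∈ Icc (x - a) (x + a) := by
    intro t ht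
    have h1 : |t * h| ≤ a := by
      rw [abs_mul, abs_of_nonneg ht.1]
      nlinarith [ht.2, abs_nonneg h]
    have h2 := abs_le.1 h1
    constructor <;> linarith [h2.1, h2.2]
  have hline : ∀ t : ℝ, HasDerivAt (fun t : ℝ => x + t * h) h t := fun t => by
    simpa using ((hasDerivAt_id t).mul_const h).const_add x
  have hx : x ∈ Icc (x - a) (x + a) := by simpa using hmem 0 (by simp)
  have hlip : ∀ t ∈ Icc (0 : ℝ) 1, |f' (x + t * h) - f' x| ≤ B * |t * h| := by
    intro t ht
    have := (convex_Icc (x - a) (x + a)).norm_image_sub_le_of_norm_hasDerivWithin_le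
      (f := f') (f' := f'') (C := B)
      (fun y hy => (hf'' y hy).hasDerivWithinAt) hbdd hx (hmem t ht)
    simpa using this
  have hg : ∀ t ∈ Icc (0 : ℝ) 1, HasDerivAt (fun t : ℝ => f (x + t * h) - f x - t * h * f' x)
      (f' (x + t * h) * h - h * f' x) t := by
    intro t ht
    have h1 := (hf' _ (hmem t ht)).comp t (hline t)
    have h2 : HasDerivAt (fun t : ℝ => t * h * f' x) (h * f' x) t := by
      simpa using ((hasDerivAt_id t).mul_const h).mul_const (f' x)
    exact (h1.sub_const (f x)).sub h2
  have hq : ∀ t : ℝ, HasDerivAt (fun t : ℝ => B * h ^ 2 / 2 * t ^ 2) (B * h ^ 2 * t) t := by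
    intro t
    refine ((hasDerivAt_pow 2 t).const_mul (B * h ^ 2 / 2)).congr_deriv ?_
    norm_num
    ring
  have key := image_norm_le_of_norm_deriv_right_le_deriv_boundary' (a := (0 : ℝ)) (b := 1)
    (fun t ht => (hg t ht).continuousAt.continuousWithinAt)
    (fun t ht => (hg t (Ico_subset_Icc_self ht)).hasDerivWithinAt)
    (B := fun t => B * h ^ 2 / 2 * t ^ 2) (B' := fun t => B * h ^ 2 * t)
    (by simp) (fun t _ => (hq t).continuousAt.continuousWithinAt)
    (fun t _ => (hq t).hasDerivWithinAt)
    (fun t ht => by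
      have h1 := hlip t (Ico_subset_Icc_self ht)
      rw [abs_mul, abs_of_nonneg ht.1] at h1
      have h2 : f' (x + t * h) * h - h * f' x = (f' (x + t * h) - f' x) * h := by ring
      rw [Real.norm_eq_abs, h2, abs_mul]
      calc _ ≤ B * (t * |h|) * |h| := by gcongr
        _ = B * |h| ^ 2 * t := by ring
        _ = _ := by rw [sq_abs])
    (x := 1) (by simp)
  simpa using key

/-- Functions continuous on `[-1, 1]` are integrable against the kernel. -/
theorem integrable_kernel_mul {K : ℝ → ℝ} (hKint : Integrable K)
    (hKsupp : ∀ r : ℝ, r ∉ Set.Icc (-1 : ℝ) 1 → K r = 0) {g : ℝ → ℝ}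
    (hg : ContinuousOn g (Icc (-1) 1)) : Integrable (fun r => K r * g r) := by
  refine (integrableOn_iff_integrable_of_support_subset (s := Icc (-1 : ℝ) 1) ?_).1
    (hKint.integrableOn.mul_continuousOn hg isCompact_Icc)
  intro r hr
  by_contra h
  exact hr (by simp [hKsupp r h])

/-- Second-order kernel-smoothing bias bound (Proposition 3.1, r = 2).
If `K` is integrable, vanishes outside `[-1,1]`, integrates to `1` and has zero
first moment, and `f` is twice differentiable on `[x-a, x+a]` with `|f''| ≤ B`
there, then `|∫ K(r)·f(x - r·a) dr − f(x)| ≤ (B·a²/2)·∫ r²·|K(r)| dr`. -/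
theorem kernel_smoothing_bias_second_order
    (K : ℝ → ℝ) (hKint : Integrable K)
    (hKsupp : ∀ r : ℝ, r ∉ Set.Icc (-1 : ℝ) 1 → K r = 0)
    (hKone : (∫ r : ℝ, K r) = 1)
    (hKfirst : (∫ r : ℝ, r * K r) = 0)
    (a : ℝ) (ha : 0 < a) (x : ℝ) (B : ℝ) (hB : 0 ≤ B)
    (f f' f'' : ℝ → ℝ)
    (hf' : ∀ y ∈ Set.Icc (x - a) (x + a), HasDerivAt f (f' y) y)
    (hf'' : ∀ y ∈ Set.Icc (x - a) (x + a), HasDerivAt f' (f'' y) y)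
    (hbdd : ∀ y ∈ Set.Icc (x - a) (x + a), |f'' y| ≤ B) :
    |(∫ r : ℝ, K r * f (x - r * a)) - f x| ≤
      B * a ^ 2 / 2 * ∫ r : ℝ, r ^ 2 * |K r| := by
  have hinc : ∀ r ∈ Icc (-1 : ℝ) 1, |-(r * a)| ≤ a := by
    intro r hr
    rw [abs_neg, abs_mul, abs_of_pos ha]
    nlinarith [abs_le.2 hr]
  have hcont : ContinuousOn (fun r : ℝ => f (x - r * a)) (Icc (-1) 1) := by
    intro r hr
    have h1 := abs_le.1 (hinc r hr)
    have h2 : x - r * a ∈ Icc (x - a) (x + a) := by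
      constructor <;> linarith [h1.1, h1.2]
    exact (ContinuousAt.comp (f := fun r : ℝ => x - r * a) (hf' _ h2).continuousAt
      (by fun_prop)).continuousWithinAt
  have i1 := integrable_kernel_mul hKint hKsupp hcont
  have i2 : Integrable (fun r => K r * f x) := hKint.mul_const _
  have i3 : Integrable (fun r => r * K r) := by
    simpa [mul_comm] using integrable_kernel_mul hKint hKsupp (g := fun r => r) (by fun_prop)
  have i4 : Integrable (fun r => r ^ 2 * |K r|) := by
    have := (integrable_kernel_mul hKint hKsupp (g := fun r => r ^ 2) (by fun_prop)).abs
    simpa [abs_mul, mul_comm] using this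
  have hbias : (∫ r : ℝ, K r * f (x - r * a)) - f x =
      ∫ r : ℝ, (K r * f (x - r * a) - K r * f x + a * f' x * (r * K r)) := by
    have i5 : Integrable (fun r => K r * f (x - r * a) - K r * f x) := i1.sub i2
    rw [integral_add i5 (i3.const_mul _), integral_sub i1 i2, integral_mul_const,
      integral_const_mul, hKone, hKfirst]
    ring
  rw [hbias, ← integral_const_mul, ← Real.norm_eq_abs]
  refine norm_integral_le_of_norm_le (i4.const_mul _) (Filter.Eventually.of_forall fun r => ?_)
  by_cases hr : r ∈ Icc (-1 : ℝ) 1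
  · have hT := abs_taylor_remainder_le (hinc r hr) hf' hf'' hbdd
    have he : K r * f (x - r * a) - K r * f x + a * f' x * (r * K r) =
        K r * (f (x + -(r * a)) - f x - -(r * a) * f' x) := by
      rw [← sub_eq_add_neg]
      ring
    rw [Real.norm_eq_abs, he, abs_mul]
    calc _ ≤ |K r| * (B * (-(r * a)) ^ 2 / 2) := by gcongr
      _ = _ := by ring
  · simp [hKsupp r hr]
end

section
/- Let T be a nonnegative real random variable and J a random variable with values in {1,2}, defined on a common probability space. Let α₁, α₂ : [0,∞) → [0,∞) be measurable with ∫₀^t (α₁(u)+α₂(u)) du < ∞ for every t ≥ 0, and suppose: (a) P(T > t) = exp(−∫₀^t (α₁(u)+α₂(u)) du) for all t ≥ 0, and (b) for j = 1,2 and every bounded measurable ψ : [0,∞) → ℝ, E[ψ(T)·1{J = j}] = ∫₀^∞ ψ(u)·α_j(u)·P(T ≥ u) du (α₁, α₂ are the cause-specific hazards). For a bounded measurable φ : [0,∞) → ℝ and j ∈ {1,2} define M_j(φ) = φ(T)·1{J = j} − ∫₀^T φ(u)·α_j(u) du. Then for all bounded measurable φ₁, φ₂ : [0,∞) → ℝ,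 E[M₁(φ₁)·M₂(φ₂)] = 0. (This is the two-type instance of the orthogonality identity of Lemma 2.1: martingale integrals associated with distinct transition types are uncorrelated.) -/
open MeasureTheory ProbabilityTheory Set

/-!
Write `S(u) = P(T ≥ u)` and `A_j(t) = ∫₀^t φ_j α_j`. Since `{J = 1}` and `{J = 2}` are disjoint, the
product `M₁(φ₁) M₂(φ₂)` equals
`A₁(T) A₂(T) - 1{J = 1} φ₁(T) A₂(T) - 1{J = 2} φ₂(T) A₁(T)`.

Assumption (b), tested on indicator functions, says that the law of `T` on `{J = j}` has density
`α_j S` on `[0, ∞)` (`map_restrict_eq_withDensity`). It therefore extends to unbounded test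
functions, and the expectations of the last two terms are `∫ φ₁ A₂ α₁ S` and `∫ φ₂ A₁ α₂ S`.
Integration by parts gives `A₁ A₂ (t) = ∫₀^t (φ₁ α₁ A₂ + A₁ φ₂ α₂)` (`primitive_mul_primitive`), and
Fubini gives `E[∫₀^T f] = ∫ f S` (`integrable_primitive_comp`, `integral_primitive_comp`), so the
expectation of the first term is the sum of the other two.

The integrability needed for this comes from the same identities. With `Λ = ∫₀^· (α₁ + α₂)`, the
function `(α₁ + α₂) S` is integrable by (b), hence `Λ(T)` is integrable by Fubini. Up to a constant
`Λ(T)` dominates `φ₁(T) A₂(T)` and `φ₂(T) A₁(T)`, and the density formula turns their integrability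
into that of `φ₁ A₂ α₁ S` and `φ₂ A₁ α₂ S`.
-/

/-! ### Survival function and primitives -/

/-- The primitive `t ↦ ∫₀^t f`, written with `Icc`, hence equal to `0` at negative `t`. -/
noncomputable def primitive (f : ℝ → ℝ) (t : ℝ) : ℝ := ∫ u in Set.Icc (0 : ℝ) t, f u

/-- The left-continuous survival function `u ↦ P(T ≥ u)`. -/
noncomputable def survival {Ω : Type*} [MeasurableSpace Ω] (μ : Measure Ω) (T : Ω → ℝ) (u : ℝ) : ℝ :=
  (μ {ω | u ≤ T ω}).toReal

section survival

variable {Ω : Type*} [MeasurableSpace Ω] {μ : Measure Ω} {T : Ω → ℝ}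

lemma survival_nonneg (u : ℝ) : 0 ≤ survival μ T u := ENNReal.toReal_nonneg

lemma survival_le_one [IsProbabilityMeasure μ] (u : ℝ) : survival μ T u ≤ 1 :=
  ENNReal.toReal_le_of_le_ofReal zero_le_one (by simpa using prob_le_one)

lemma measurable_survival [IsProbabilityMeasure μ] : Measurable (survival μ T) := by
  have h : Antitone (survival μ T) := fun u v huv =>
    ENNReal.toReal_mono (measure_ne_top _ _) (measure_mono fun ω (hω : v ≤ T ω) => huv.trans hω)
  exact h.measurable

end survival

section primitive

lemma measurable_primitive {f : ℝ → ℝ} (hf : Measurable f) : Measurable (primitive f) := by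
  have h : primitive f = fun t => ∫ u, (if 0 ≤ u ∧ u ≤ t then f u else 0) := by
    ext t
    rw [primitive, ← integral_indicator measurableSet_Icc]
    simp only [indicator, mem_Icc]
  rw [h]
  have hm : Measurable (Function.uncurry fun t u : ℝ => if 0 ≤ u ∧ u ≤ t then f u else 0) := by
    refine Measurable.ite ?_ (hf.comp measurable_snd) measurable_const
    exact (measurableSet_le measurable_const measurable_snd).inter
      (measurableSet_le measurable_snd measurable_fst)
  exact hm.stronglyMeasurable.integral_prod_right.measurable

lemma abs_primitive_le {f g : ℝ → ℝ} {C : ℝ} (hg : ∀ t, 0 ≤ t → IntegrableOn g (Icc 0 t))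
    (hfg : ∀ u, 0 ≤ u → |f u| ≤ C * g u) {t : ℝ} (ht : 0 ≤ t) :
    |primitive f t| ≤ C * primitive g t := by
  rw [primitive, primitive, ← integral_const_mul, ← Real.norm_eq_abs]
  refine norm_integral_le_of_norm_le ((hg t ht).const_mul C) ?_
  filter_upwards [ae_restrict_mem measurableSet_Icc] with u hu using hfg u hu.1

/-- Integration by parts for two primitives vanishing at `0`. -/
lemma primitive_mul_primitive {f g : ℝ → ℝ} {t : ℝ} (ht : 0 ≤ t)
    (hf : IntegrableOn f (Icc 0 t)) (hg : IntegrableOn g (Icc 0 t)) :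
    primitive f t * primitive g t =
      primitive (fun u => f u * primitive g u + primitive f u * g u) t := by
  have key : ∀ (h : ℝ → ℝ) (s : ℝ), 0 ≤ s → primitive h s = ∫ u in (0 : ℝ)..s, h u := by
    intro h s hs
    rw [primitive, integral_Icc_eq_integral_Ioc, intervalIntegral.integral_of_le hs]
  have hf' : IntervalIntegrable f volume 0 t :=
    (intervalIntegrable_iff_integrableOn_Icc_of_le ht).2 hf
  have hg' : IntervalIntegrable g volume 0 t :=
    (intervalIntegrable_iff_integrableOn_Icc_of_le ht).2 hg
  have h0 : (0 : ℝ) ∈ uIcc 0 t := left_mem_uIcc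
  have hparts := (hf'.absolutelyContinuousOnInterval_intervalIntegral h0).integral_deriv_mul_eq_sub
    (hg'.absolutelyContinuousOnInterval_intervalIntegral h0)
  simp only [intervalIntegral.integral_same, mul_zero, sub_zero] at hparts
  rw [key _ _ ht, key _ _ ht, key _ _ ht, ← hparts]
  apply intervalIntegral.integral_congr_ae
  filter_upwards [hf'.ae_hasDerivAt_integral, hg'.ae_hasDerivAt_integral] with x hx₁ hx₂ hx
  have hx' := uIoc_subset_uIcc hx
  have hx0 : 0 ≤ x := by
    rw [uIcc_of_le ht] at hx'
    exact hx'.1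
  rw [(hx₁ hx' 0 h0).deriv, (hx₂ hx' 0 h0).deriv, key _ _ hx0, key _ _ hx0]

end primitive

/-! ### Expectation of a primitive evaluated at `T` -/

section fubini

variable {Ω : Type*} [MeasurableSpace Ω] {μ : Measure Ω} [IsProbabilityMeasure μ] {T : Ω → ℝ}

/-- Joint integrability of `(ω, u) ↦ f(u) 1{u ≤ T(ω)}`, to which Fubini's theorem is applied. -/
lemma integrable_fubini (hT : Measurable T) {f : ℝ → ℝ} (hf : Measurable f)
    (hfS : IntegrableOn (fun u => f u * survival μ T u) (Ici 0)) :
    Integrable (Function.uncurry fun ω u => if u ≤ T ω then f u else 0)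
      (μ.prod (volume.restrict (Ici (0 : ℝ)))) := by
  have hset : ∀ u : ℝ, MeasurableSet {ω | u ≤ T ω} := fun u => measurableSet_le measurable_const hT
  have hm : Measurable (Function.uncurry fun ω u => if u ≤ T ω then f u else 0) :=
    Measurable.ite (measurableSet_le measurable_snd (hT.comp measurable_fst))
      (hf.comp measurable_snd) measurable_const
  rw [integrable_prod_iff' hm.aestronglyMeasurable]
  constructor
  · refine Filter.Eventually.of_forall fun u => ?_
    exact (integrable_const (f u)).indicator (hset u)
  · refine hfS.norm.congr (Filter.Eventually.of_forall fun u => ?_)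
    have h : (fun ω => ‖Function.uncurry (fun ω u => if u ≤ T ω then f u else 0) (ω, u)‖) =
        {ω | u ≤ T ω}.indicator fun _ => ‖f u‖ := by
      ext ω
      by_cases h : u ≤ T ω <;> simp [h]
    simp only
    rw [h, integral_indicator_const _ (hset u), norm_mul,
      Real.norm_of_nonneg (survival_nonneg u), smul_eq_mul, mul_comm]
    rfl

lemma primitive_eq_integral (f : ℝ → ℝ) (t : ℝ) :
    primitive f t = ∫ u in Ici (0 : ℝ), (if u ≤ t then f u else 0) := by
  have h : (fun u => if u ≤ t then f u else 0) = (Iic t).indicator f := by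
    ext u
    simp [indicator]
  rw [h, setIntegral_indicator measurableSet_Iic, primitive]
  rfl

lemma integrable_primitive_comp (hT : Measurable T) {f : ℝ → ℝ} (hf : Measurable f)
    (hfS : IntegrableOn (fun u => f u * survival μ T u) (Ici 0)) :
    Integrable (fun ω => primitive f (T ω)) μ := by
  simp only [primitive_eq_integral]
  exact (integrable_fubini hT hf hfS).integral_prod_left

lemma integral_primitive_comp (hT : Measurable T) {f : ℝ → ℝ} (hf : Measurable f)
    (hfS : IntegrableOn (fun u => f u * survival μ T u) (Ici 0)) :
    ∫ ω, primitive f (T ω) ∂μ = ∫ u in Ici (0 : ℝ), f u * survival μ T u := by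
  simp only [primitive_eq_integral]
  rw [integral_integral_swap (integrable_fubini hT hf hfS)]
  congr 1
  ext u
  have h : (fun ω => if u ≤ T ω then f u else 0) = {ω | u ≤ T ω}.indicator fun _ => f u := by
    ext ω
    simp [indicator]
  rw [h, integral_indicator_const _ (measurableSet_le measurable_const hT), smul_eq_mul, mul_comm]
  rfl

end fubini

/-! ### Law of `T` on the event `{J = j}` -/

section cause

variable {Ω : Type*} [MeasurableSpace Ω] {μ : Measure Ω} [IsProbabilityMeasure μ] {T : Ω → ℝ}

lemma integrableOn_mul_survival_Icc {α : ℝ → ℝ}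
    (hint : ∀ t : ℝ, 0 ≤ t → IntegrableOn α (Icc 0 t)) {t : ℝ} (ht : 0 ≤ t) :
    IntegrableOn (fun u => α u * survival μ T u) (Icc 0 t) :=
  (hint t ht).mul_bdd (c := 1) measurable_survival.aestronglyMeasurable
    (Filter.Eventually.of_forall fun u => by
      rw [Real.norm_of_nonneg (survival_nonneg u)]
      exact survival_le_one u)

/-- Integrability of `α_j S`, from (b) tested on the indicators of `[0, n]`. A direct test on the
constant `1` would not exclude that the Bochner integral of `α_j S` is a junk value. -/
lemma integrableOn_mul_survival {E : Set Ω} [DecidablePred (· ∈ E)] {α : ℝ → ℝ}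
    (hα0 : ∀ u, 0 ≤ u → 0 ≤ α u)
    (hint : ∀ t : ℝ, 0 ≤ t → IntegrableOn α (Icc 0 t))
    (hcause : ∀ ψ : ℝ → ℝ, Measurable ψ → (∃ M : ℝ, ∀ u : ℝ, |ψ u| ≤ M) →
      (∫ ω, (if ω ∈ E then ψ (T ω) else 0) ∂μ) =
        ∫ u in Ici (0 : ℝ), ψ u * α u * survival μ T u) :
    IntegrableOn (fun u => α u * survival μ T u) (Ici 0) := by
  rw [integrableOn_Ici_iff_integrableOn_Ioi]
  refine integrableOn_Ioi_of_intervalIntegral_norm_bounded (l := Filter.atTop)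
    (b := fun n : ℕ => (n : ℝ)) 1 0
    (fun n => (integrableOn_mul_survival_Icc hint n.cast_nonneg).mono_set Ioc_subset_Icc_self)
    tendsto_natCast_atTop_atTop (Filter.Eventually.of_forall fun n => ?_)
  have hn : (0 : ℝ) ≤ n := n.cast_nonneg
  have h := hcause ((Iic (n : ℝ)).indicator 1) (measurable_one.indicator measurableSet_Iic)
    ⟨1, fun u => by by_cases hu : u ≤ n <;> simp [hu]⟩
  have hR : ∫ u in Ici (0 : ℝ), (Iic (n : ℝ)).indicator 1 u * α u * survival μ T u =
      ∫ u in (0 : ℝ)..n, ‖α u * survival μ T u‖ := by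
    rw [intervalIntegral.integral_of_le hn, ← integral_Icc_eq_integral_Ioc]
    have h1 : (fun u => (Iic (n : ℝ)).indicator 1 u * α u * survival μ T u) =
        (Iic (n : ℝ)).indicator fun u => α u * survival μ T u := by
      ext u
      by_cases hu : u ≤ n <;> simp [hu]
    rw [h1, setIntegral_indicator measurableSet_Iic]
    refine setIntegral_congr_fun measurableSet_Icc fun u hu => ?_
    exact (Real.norm_of_nonneg (mul_nonneg (hα0 u hu.1) (survival_nonneg u))).symm
  rw [← hR, ← h]
  have hle := norm_integral_le_of_norm_le_const (μ := μ) (C := 1)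
    (f := fun ω => if ω ∈ E then (Iic (n : ℝ)).indicator 1 (T ω) else (0 : ℝ))
    (Filter.Eventually.of_forall fun ω => by
      by_cases hE : ω ∈ E <;> by_cases hu : T ω ≤ n <;> simp [hE, hu])
  simp only [probReal_univ, mul_one] at hle
  exact (le_abs_self _).trans hle

/-- The law of `T` on the event `E = {J = j}` has density `α_j S` on `[0, ∞)`. -/
lemma map_restrict_eq_withDensity (hT : Measurable T) {E : Set Ω} [DecidablePred (· ∈ E)]
    (hE : MeasurableSet E) {α : ℝ → ℝ} (hα0 : ∀ u, 0 ≤ u → 0 ≤ α u)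
    (hint : ∀ t : ℝ, 0 ≤ t → IntegrableOn α (Icc 0 t))
    (hcause : ∀ ψ : ℝ → ℝ, Measurable ψ → (∃ M : ℝ, ∀ u : ℝ, |ψ u| ≤ M) →
      (∫ ω, (if ω ∈ E then ψ (T ω) else 0) ∂μ) =
        ∫ u in Ici (0 : ℝ), ψ u * α u * survival μ T u) :
    (μ.restrict E).map T = (volume.restrict (Ici (0 : ℝ))).withDensity
      fun u => ENNReal.ofReal (α u * survival μ T u) := by
  have hI := integrableOn_mul_survival hα0 hint hcause
  ext s hs
  rw [Measure.map_apply hT hs, Measure.restrict_apply (hT hs), withDensity_apply _ hs]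
  have h := hcause (s.indicator 1) (measurable_one.indicator hs)
    ⟨1, fun u => by by_cases hu : u ∈ s <;> simp [hu]⟩
  have h1 : (fun ω => if ω ∈ E then s.indicator 1 (T ω) else (0 : ℝ)) =
      (T ⁻¹' s ∩ E).indicator 1 := by
    ext ω
    by_cases hω : ω ∈ E <;> by_cases hu : T ω ∈ s <;> simp [hω, hu]
  have h2 : (fun u => s.indicator 1 u * α u * survival μ T u) =
      s.indicator fun u => α u * survival μ T u := by
    ext u
    by_cases hu : u ∈ s <;> simp [hu]
  rw [h1, h2, integral_indicator_one ((hT hs).inter hE), integral_indicator hs] at h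
  rw [← ofReal_integral_eq_lintegral_ofReal (Integrable.restrict hI), ← h, ofReal_measureReal]
  refine ae_restrict_of_ae ?_
  filter_upwards [ae_restrict_mem measurableSet_Ici] with u hu
  exact mul_nonneg (hα0 u hu) (survival_nonneg u)

/-- Assumption (b) for an arbitrary measurable test function. -/
lemma cause_extension (hT : Measurable T) {E : Set Ω} [DecidablePred (· ∈ E)]
    (hE : MeasurableSet E) {α : ℝ → ℝ} (hα : Measurable α) (hα0 : ∀ u, 0 ≤ u → 0 ≤ α u)
    (hint : ∀ t : ℝ, 0 ≤ t → IntegrableOn α (Icc 0 t))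
    (hcause : ∀ ψ : ℝ → ℝ, Measurable ψ → (∃ M : ℝ, ∀ u : ℝ, |ψ u| ≤ M) →
      (∫ ω, (if ω ∈ E then ψ (T ω) else 0) ∂μ) =
        ∫ u in Ici (0 : ℝ), ψ u * α u * survival μ T u)
    {g : ℝ → ℝ} (hg : Measurable g) :
    (IntegrableOn (fun ω => g (T ω)) E μ ↔
      IntegrableOn (fun u => g u * α u * survival μ T u) (Ici 0)) ∧
    ∫ ω in E, g (T ω) ∂μ = ∫ u in Ici (0 : ℝ), g u * α u * survival μ T u := by
  have hlaw := map_restrict_eq_withDensity hT hE hα0 hint hcause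
  have hd : Measurable fun u => ENNReal.ofReal (α u * survival μ T u) :=
    (hα.mul measurable_survival).ennreal_ofReal
  have hae : (fun u => (ENNReal.ofReal (α u * survival μ T u)).toReal • g u)
      =ᵐ[volume.restrict (Ici (0 : ℝ))] fun u => g u * α u * survival μ T u := by
    filter_upwards [ae_restrict_mem measurableSet_Ici] with u hu
    rw [ENNReal.toReal_ofReal (mul_nonneg (hα0 u hu) (survival_nonneg u)), smul_eq_mul]
    ring
  have hfin : ∀ᵐ u ∂volume.restrict (Ici (0 : ℝ)),
      ENNReal.ofReal (α u * survival μ T u) < ⊤ :=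
    Filter.Eventually.of_forall fun u => ENNReal.ofReal_lt_top
  constructor
  · have h := integrable_map_measure (μ := μ.restrict E) (f := T) (g := g)
      hg.aestronglyMeasurable hT.aemeasurable
    rw [hlaw, integrable_withDensity_iff_integrable_smul' hd hfin, integrable_congr hae] at h
    exact h.symm
  · rw [← integral_map (μ := μ.restrict E) hT.aemeasurable hg.aestronglyMeasurable, hlaw,
      integral_withDensity_eq_integral_toReal_smul hd hfin, integral_congr_ae hae]

end cause

/-! ### Orthogonality -/

/-- Two-type instance of the orthogonality identity of Lemma 2.1.
With `T` a nonnegative event time, `J ∈ {1,2}` the event type, `α₁`, `α₂` the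
cause-specific hazards (assumptions (a) and (b)), and
`M_j(φ) = φ(T)·1{J = j} − ∫₀^T φ·α_j`, the martingale integrals associated with
distinct transition types are uncorrelated: `E[M₁(φ₁)·M₂(φ₂)] = 0`. -/
theorem competing_risks_martingales_orthogonal
    {Ω : Type*} [MeasurableSpace Ω] (μ : Measure Ω) [IsProbabilityMeasure μ]
    (T : Ω → ℝ) (hTmeas : Measurable T) (hTpos : ∀ ω, 0 ≤ T ω)
    (J : Ω → ℕ) (hJmeas : Measurable J) (hJval : ∀ ω, J ω = 1 ∨ J ω = 2)
    (α₁ α₂ : ℝ → ℝ) (hα₁_meas : Measurable α₁) (hα₂_meas : Measurable α₂)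
    (hα₁_nonneg : ∀ u : ℝ, 0 ≤ u → 0 ≤ α₁ u)
    (hα₂_nonneg : ∀ u : ℝ, 0 ≤ u → 0 ≤ α₂ u)
    (hα_int : ∀ t : ℝ, 0 ≤ t → IntegrableOn (fun u => α₁ u + α₂ u) (Set.Icc 0 t))
    -- (a): the survival function of `T` has hazard `α₁ + α₂`
    (hsurv : ∀ t : ℝ, 0 ≤ t →
      (μ {ω | t < T ω}).toReal =
        Real.exp (-∫ u in Set.Icc (0 : ℝ) t, (α₁ u + α₂ u)))
    -- (b): `α₁`, `α₂` are the cause-specific hazards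
    (hcause₁ : ∀ ψ : ℝ → ℝ, Measurable ψ → (∃ Mψ : ℝ, ∀ u : ℝ, |ψ u| ≤ Mψ) →
      (∫ ω, (if J ω = 1 then ψ (T ω) else 0) ∂μ) =
        ∫ u in Set.Ici (0 : ℝ), ψ u * α₁ u * (μ {ω | u ≤ T ω}).toReal)
    (hcause₂ : ∀ ψ : ℝ → ℝ, Measurable ψ → (∃ Mψ : ℝ, ∀ u : ℝ, |ψ u| ≤ Mψ) →
      (∫ ω, (if J ω = 2 then ψ (T ω) else 0) ∂μ) =
        ∫ u in Set.Ici (0 : ℝ), ψ u * α₂ u * (μ {ω | u ≤ T ω}).toReal)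
    (φ₁ φ₂ : ℝ → ℝ) (hφ₁_meas : Measurable φ₁) (hφ₂_meas : Measurable φ₂)
    (M₁ M₂ : ℝ) (hφ₁_bdd : ∀ u : ℝ, |φ₁ u| ≤ M₁) (hφ₂_bdd : ∀ u : ℝ, |φ₂ u| ≤ M₂) :
    (∫ ω,
        ((if J ω = 1 then φ₁ (T ω) else 0) -
            ∫ u in Set.Icc (0 : ℝ) (T ω), φ₁ u * α₁ u) *
        ((if J ω = 2 then φ₂ (T ω) else 0) -
            ∫ u in Set.Icc (0 : ℝ) (T ω), φ₂ u * α₂ u) ∂μ) = 0 := by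
  classical
  set E₁ : Set Ω := {ω | J ω = 1} with hE₁def
  set E₂ : Set Ω := {ω | J ω = 2} with hE₂def
  have hE₁ : MeasurableSet E₁ := hJmeas (measurableSet_singleton 1)
  have hE₂ : MeasurableSet E₂ := hJmeas (measurableSet_singleton 2)
  have hint₁ : ∀ t : ℝ, 0 ≤ t → IntegrableOn α₁ (Icc 0 t) := fun t ht =>
    (hα_int t ht).mono' hα₁_meas.aestronglyMeasurable (by
      filter_upwards [ae_restrict_mem measurableSet_Icc] with u hu
      rw [Real.norm_of_nonneg (hα₁_nonneg u hu.1)]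
      linarith [hα₂_nonneg u hu.1])
  have hint₂ : ∀ t : ℝ, 0 ≤ t → IntegrableOn α₂ (Icc 0 t) := fun t ht =>
    (hα_int t ht).mono' hα₂_meas.aestronglyMeasurable (by
      filter_upwards [ae_restrict_mem measurableSet_Icc] with u hu
      rw [Real.norm_of_nonneg (hα₂_nonneg u hu.1)]
      linarith [hα₁_nonneg u hu.1])
  have hc₁ : ∀ ψ : ℝ → ℝ, Measurable ψ → (∃ M : ℝ, ∀ u : ℝ, |ψ u| ≤ M) →
      (∫ ω, (if ω ∈ E₁ then ψ (T ω) else 0) ∂μ) =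
        ∫ u in Ici (0 : ℝ), ψ u * α₁ u * survival μ T u := fun ψ h1 h2 => by
    simpa [hE₁def, survival] using hcause₁ ψ h1 h2
  have hc₂ : ∀ ψ : ℝ → ℝ, Measurable ψ → (∃ M : ℝ, ∀ u : ℝ, |ψ u| ≤ M) →
      (∫ ω, (if ω ∈ E₂ then ψ (T ω) else 0) ∂μ) =
        ∫ u in Ici (0 : ℝ), ψ u * α₂ u * survival μ T u := fun ψ h1 h2 => by
    simpa [hE₂def, survival] using hcause₂ ψ h1 h2
  have hext₁ {g : ℝ → ℝ} (hg : Measurable g) :=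
    cause_extension hTmeas hE₁ hα₁_meas hα₁_nonneg hint₁ hc₁ hg
  have hext₂ {g : ℝ → ℝ} (hg : Measurable g) :=
    cause_extension hTmeas hE₂ hα₂_meas hα₂_nonneg hint₂ hc₂ hg
  have hM₁ : 0 ≤ M₁ := (abs_nonneg _).trans (hφ₁_bdd 0)
  have hM₂ : 0 ≤ M₂ := (abs_nonneg _).trans (hφ₂_bdd 0)
  -- `Λ` is the cumulative total hazard; `E[Λ(T)]` is finite.
  set Λ : ℝ → ℝ := primitive fun u => α₁ u + α₂ u with hΛdef
  have hΛint : Integrable (fun ω => Λ (T ω)) μ := by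
    refine integrable_primitive_comp hTmeas (hα₁_meas.add hα₂_meas) ?_
    refine ((integrableOn_mul_survival hα₁_nonneg hint₁ hc₁).add
      (integrableOn_mul_survival hα₂_nonneg hint₂ hc₂)).congr
        (Filter.Eventually.of_forall fun u => ?_)
    exact (add_mul _ _ _).symm
  set a₁ : ℝ → ℝ := fun u => φ₁ u * α₁ u with ha₁
  set a₂ : ℝ → ℝ := fun u => φ₂ u * α₂ u with ha₂
  have ha₁m : Measurable a₁ := hφ₁_meas.mul hα₁_meas
  have ha₂m : Measurable a₂ := hφ₂_meas.mul hα₂_meas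
  have hA₁m : Measurable (primitive a₁) := measurable_primitive ha₁m
  have hA₂m : Measurable (primitive a₂) := measurable_primitive ha₂m
  have haint₁ : ∀ t : ℝ, 0 ≤ t → IntegrableOn a₁ (Icc 0 t) := fun t ht =>
    (hint₁ t ht).bdd_mul (c := M₁) hφ₁_meas.aestronglyMeasurable
      (Filter.Eventually.of_forall hφ₁_bdd)
  have haint₂ : ∀ t : ℝ, 0 ≤ t → IntegrableOn a₂ (Icc 0 t) := fun t ht =>
    (hint₂ t ht).bdd_mul (c := M₂) hφ₂_meas.aestronglyMeasurable
      (Filter.Eventually.of_forall hφ₂_bdd)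
  have hA₁le : ∀ t, 0 ≤ t → |primitive a₁ t| ≤ M₁ * Λ t := fun t ht =>
    abs_primitive_le hα_int (fun u hu => by
      rw [ha₁, abs_mul, abs_of_nonneg (hα₁_nonneg u hu)]
      exact mul_le_mul (hφ₁_bdd u) (by linarith [hα₂_nonneg u hu]) (hα₁_nonneg u hu) hM₁) ht
  have hA₂le : ∀ t, 0 ≤ t → |primitive a₂ t| ≤ M₂ * Λ t := fun t ht =>
    abs_primitive_le hα_int (fun u hu => by
      rw [ha₂, abs_mul, abs_of_nonneg (hα₂_nonneg u hu)]
      exact mul_le_mul (hφ₂_bdd u) (by linarith [hα₁_nonneg u hu]) (hα₂_nonneg u hu) hM₂) ht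
  -- Test functions of the two cross terms, and their integrability.
  have hg₁m : Measurable fun u => φ₁ u * primitive a₂ u := hφ₁_meas.mul hA₂m
  have hg₂m : Measurable fun u => φ₂ u * primitive a₁ u := hφ₂_meas.mul hA₁m
  have hg₁T : Integrable (fun ω => φ₁ (T ω) * primitive a₂ (T ω)) μ :=
    (hΛint.const_mul (M₁ * M₂)).mono' (hg₁m.comp hTmeas).aestronglyMeasurable
      (Filter.Eventually.of_forall fun ω => by
        rw [norm_mul, mul_assoc]
        exact mul_le_mul (hφ₁_bdd _) (hA₂le _ (hTpos ω)) (norm_nonneg _) hM₁)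
  have hg₂T : Integrable (fun ω => φ₂ (T ω) * primitive a₁ (T ω)) μ :=
    (hΛint.const_mul (M₂ * M₁)).mono' (hg₂m.comp hTmeas).aestronglyMeasurable
      (Filter.Eventually.of_forall fun ω => by
        rw [norm_mul, mul_assoc]
        exact mul_le_mul (hφ₂_bdd _) (hA₁le _ (hTpos ω)) (norm_nonneg _) hM₂)
  have hI₁ := (hext₁ hg₁m).1.1 hg₁T.integrableOn
  have hI₂ := (hext₂ hg₂m).1.1 hg₂T.integrableOn
  set f : ℝ → ℝ := fun u => a₁ u * primitive a₂ u + primitive a₁ u * a₂ u with hfdef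
  have hfm : Measurable f := (ha₁m.mul hA₂m).add (hA₁m.mul ha₂m)
  have hfS : (fun u => f u * survival μ T u) = fun u =>
      φ₁ u * primitive a₂ u * α₁ u * survival μ T u +
        φ₂ u * primitive a₁ u * α₂ u * survival μ T u := by
    ext u
    simp only [hfdef, ha₁, ha₂]
    ring
  have hfI : IntegrableOn (fun u => f u * survival μ T u) (Ici 0) := by
    rw [hfS]
    exact hI₁.add hI₂
  have hprod : ∀ ω, primitive a₁ (T ω) * primitive a₂ (T ω) = primitive f (T ω) := fun ω =>
    primitive_mul_primitive (hTpos ω) (haint₁ _ (hTpos ω)) (haint₂ _ (hTpos ω))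
  have hsplit : ∀ ω,
      ((if J ω = 1 then φ₁ (T ω) else 0) - ∫ u in Set.Icc (0 : ℝ) (T ω), φ₁ u * α₁ u) *
        ((if J ω = 2 then φ₂ (T ω) else 0) - ∫ u in Set.Icc (0 : ℝ) (T ω), φ₂ u * α₂ u) =
      primitive f (T ω) - E₁.indicator (fun ω => φ₁ (T ω) * primitive a₂ (T ω)) ω -
        E₂.indicator (fun ω => φ₂ (T ω) * primitive a₁ (T ω)) ω := by
    intro ω
    rw [← hprod]
    change ((if J ω = 1 then φ₁ (T ω) else 0) - primitive a₁ (T ω)) *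
      ((if J ω = 2 then φ₂ (T ω) else 0) - primitive a₂ (T ω)) = _
    rcases hJval ω with h | h <;> simp [hE₁def, hE₂def, h] <;> ring
  refine (integral_congr_ae (Filter.Eventually.of_forall hsplit)).trans ?_
  have hfT := integrable_primitive_comp hTmeas hfm hfI
  have hdiff : Integrable (fun ω => primitive f (T ω) -
      E₁.indicator (fun ω => φ₁ (T ω) * primitive a₂ (T ω)) ω) μ := hfT.sub (hg₁T.indicator hE₁)
  rw [integral_sub hdiff (hg₂T.indicator hE₂),
    integral_sub hfT (hg₁T.indicator hE₁), integral_indicator hE₁, integral_indicator hE₂,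
    (hext₁ hg₁m).2, (hext₂ hg₂m).2, integral_primitive_comp hTmeas hfm hfI, hfS,
    integral_add hI₁ hI₂]
  ring
end
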